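/- Let n ≥ 1 be an integer and let S_n be the (finite) set of n-periodic Ptolemy diagrams of the ∞-gon in which every arc has length at most n. The group ℤ/n acts on S_n by shifting, b · X = { (i+b, j+b) : (i,j) ∈ X }. Then n times the number of orbits of this action equals the sum over all divisors d of n of φ(d) · N_{n/d}, where φ is Euler's totient function and N_m denotes the sum over integers ℓ ≥ 0 of 2^ℓ · C(m−1+ℓ, ℓ) · C(2m−1, m−1−2ℓ). -/

import Mathlib

/-- An arc of the ∞-gon: a pair `(i,j)` of integers with `j - i ≥ 2`. -/
def IsArc (a : ℤ × ℤ) : Prop := 2 ≤ a.2 - a.1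

/-- Two arcs `(i,j)` and `(k,l)` cross if `i < k < j < l` or `k < i < l < j`. -/
def Cross (a b : ℤ × ℤ) : Prop :=
  (a.1 < b.1 ∧ b.1 < a.2 ∧ a.2 < b.2) ∨ (b.1 < a.1 ∧ a.1 < b.2 ∧ b.2 < a.2)

/-- `nc X` is the collection of all arcs crossing no arc of `X`. -/
def nc (X : Set (ℤ × ℤ)) : Set (ℤ × ℤ) :=
  {a | IsArc a ∧ ∀ b ∈ X, ¬ Cross a b}

/-- A collection of arcs is `n`-periodic if it is stable under shifts by multiples of `n`. -/
def Periodic (n : ℤ) (X : Set (ℤ × ℤ)) : Prop :=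
  ∀ i j r : ℤ, (i, j) ∈ X → (i + r * n, j + r * n) ∈ X

/-- The Ptolemy condition: whenever `(i,j), (r,s) ∈ X` cross with `i < r`
(so `i < r < j < s`), each of the pairs `(i,r)`, `(i,s)`, `(r,j)`, `(j,s)`
that is an arc also belongs to `X`. -/
def IsPtolemy (X : Set (ℤ × ℤ)) : Prop :=
  ∀ i j r s : ℤ, (i, j) ∈ X → (r, s) ∈ X → i < r → r < j → j < s →
    (2 ≤ r - i → (i, r) ∈ X) ∧ (2 ≤ s - i → (i, s) ∈ X) ∧
    (2 ≤ j - r → (r, j) ∈ X) ∧ (2 ≤ s - j → (j, s) ∈ X)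

/-- Shift a collection of arcs by `b`. -/
def shiftSet (b : ℤ) (X : Set (ℤ × ℤ)) : Set (ℤ × ℤ) :=
  {a | ∃ p ∈ X, a = (p.1 + b, p.2 + b)}

/-- The `n`-periodic Ptolemy diagrams of the ∞-gon all of whose arcs have length
at most `n`. -/
def goodDiagrams (n : ℕ) : Set (Set (ℤ × ℤ)) :=
  {X | (∀ a ∈ X, IsArc a) ∧ Periodic (n : ℤ) X ∧ IsPtolemy X ∧
    ∀ a ∈ X, a.2 - a.1 ≤ (n : ℤ)}

/-- `N m = ∑_{ℓ ≥ 0} 2^ℓ C(m−1+ℓ, ℓ) C(2m−1, m−1−2ℓ)`. -/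
def torsionHalfCount (m : ℕ) : ℕ :=
  ∑ ℓ ∈ Finset.range ((m - 1) / 2 + 1),
    2 ^ ℓ * Nat.choose (m - 1 + ℓ) ℓ * Nat.choose (2 * m - 1) (m - 1 - 2 * ℓ)

/-!
A periodic diagram has a unique maximal arc over the edge `(0, 1)`. Cutting the ∞-gon along this arc
and its translates leaves a polygon diagram below the arc, which contains its base, and an arbitrary
polygon diagram beside it; the arc has as many positions as its length. If `P` and `D` are the
generating functions of polygon diagrams with base and of all polygon diagrams, the number of
diagrams of period `n` is thus the coefficient of `X ^ (n - 1)` in `P' * D`.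

Cutting a polygon at the longest arc from its first vertex gives `D * (1 - P) = 1`, and examining
the triangles on the base gives `P * (1 - 2 * P - P ^ 2) = X * (1 - P)`: the base is an edge, or is
the side of an empty cell, which may be merged with the outside by deleting the base, or is the side
of a clique. Lagrange inversion then turns the coefficient into `N_n`.

A diagram fixed by the shift by `b` has period `g = gcd(n, b)`. An arc longer than `g` would cross
its translate by `g`, and the Ptolemy condition would produce arbitrarily long arcs. Hence the
diagrams fixed by `b` are those counted by `N_g`, and Burnside's lemma concludes.
-/

section LagrangeInversion

open PowerSeries

variable {R : Type*} [CommRing R]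

theorem pow_dvd_subst_sub_sum {F : R⟦X⟧} (hF : HasSubst F) (G : R⟦X⟧) (N : ℕ) :
    F ^ N ∣ G.subst F - ∑ k ∈ Finset.range N, C (coeff k G) * F ^ k := by
  have hdvd : X ^ N ∣ G - ∑ k ∈ Finset.range N, C (coeff k G) * X ^ k := by
    refine X_pow_dvd_iff.2 fun m hm => ?_
    simp [coeff_X_pow, hm]
  have hC (r : R) : substAlgHom (R := R) hF (C r) = C r := by
    simpa [PowerSeries.algebraMap_apply] using (substAlgHom (R := R) hF).commutes r
  simpa [← coe_substAlgHom hF, hC, substAlgHom_X hF] using map_dvd (substAlgHom (R := R) hF) hdvd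

theorem coeff_derivative_mul_pow_succ [IsAddTorsionFree R] {F φ : R⟦X⟧} (h : F * φ = X) {j : ℕ}
    (hj : j ≠ 0) : coeff j (d⁄dX R F * φ ^ (j + 1)) = 0 := by
  obtain ⟨i, rfl⟩ := Nat.exists_eq_succ_of_ne_zero hj
  have hderiv : d⁄dX R F * φ + F * d⁄dX R φ = 1 := by
    simpa [mul_comm, add_comm] using congrArg (d⁄dX R) h
  have hsmul : (i + 1) • (d⁄dX R F * φ ^ (i + 2)) =
      (i + 1) • φ ^ (i + 1) - X * d⁄dX R (φ ^ (i + 1)) := by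
    rw [Derivation.leibniz_pow, ← h]
    simp only [nsmul_eq_mul, smul_eq_mul, add_tsub_cancel_right]
    linear_combination ((i + 1 : ℕ) : R⟦X⟧) * φ ^ (i + 1) * hderiv
  have hcoeff := congrArg (coeff (i + 1)) hsmul
  rw [map_sub, map_nsmul, map_nsmul, coeff_succ_X_mul, coeff_derivative, nsmul_eq_mul,
    nsmul_eq_mul, Nat.cast_succ, mul_comm _ (coeff (i + 1) (φ ^ (i + 1))), sub_self,
    ← Nat.cast_succ, ← nsmul_eq_mul] at hcoeff
  exact (smul_eq_zero_iff_right i.succ_ne_zero).1 hcoeff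

theorem coeff_pow_mul_derivative_mul_pow [IsAddTorsionFree R] {F φ : R⟦X⟧} (h : F * φ = X)
    (h₀ : constantCoeff F = 0) {k m : ℕ} (hkm : k ≤ m) :
    coeff m (F ^ k * d⁄dX R F * φ ^ (m + 1)) = if k = m then 1 else 0 := by
  obtain ⟨j, rfl⟩ := Nat.exists_eq_add_of_le hkm
  have hX : F ^ k * d⁄dX R F * φ ^ (k + j + 1) = X ^ k * (d⁄dX R F * φ ^ (j + 1)) := by
    rw [← h]; ring
  rw [hX, add_comm k j, coeff_X_pow_mul]
  rcases eq_or_ne j 0 with rfl | hj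
  · have hderiv : F * d⁄dX R φ + φ * d⁄dX R F = 1 := by
      simpa using congrArg (d⁄dX R) h
    simpa [h₀, mul_comm] using congrArg constantCoeff hderiv
  · rw [coeff_derivative_mul_pow_succ h hj, if_neg (by omega)]

/-- The residue change of variables behind Lagrange inversion: `m`-th coefficients are residues
of `G(X) dX / X ^ (m + 1)`, and the substitution `X = F` turns `1 / F ^ (m + 1)` into
`φ ^ (m + 1) / X ^ (m + 1)`. -/
theorem coeff_subst_mul_derivative_mul_pow [IsAddTorsionFree R] {F φ : R⟦X⟧} (h : F * φ = X)
    (h₀ : constantCoeff F = 0) (G : R⟦X⟧) (m : ℕ) :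
    coeff m (G.subst F * d⁄dX R F * φ ^ (m + 1)) = coeff m G := by
  obtain ⟨H, hH⟩ := pow_dvd_subst_sub_sum (HasSubst.of_constantCoeff_zero' h₀) G (m + 1)
  have hsum : G.subst F * d⁄dX R F * φ ^ (m + 1) =
      ∑ k ∈ Finset.range (m + 1), C (coeff k G) * (F ^ k * d⁄dX R F * φ ^ (m + 1)) +
        X ^ (m + 1) * (H * d⁄dX R F) := by
    rw [← h, eq_add_of_sub_eq' hH, add_mul, add_mul, Finset.sum_mul, Finset.sum_mul]
    congr 1
    · exact Finset.sum_congr rfl fun k _ => by ring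
    · ring
  have hcoeff : ∀ k ∈ Finset.range (m + 1),
      coeff m (C (coeff k G) * (F ^ k * d⁄dX R F * φ ^ (m + 1))) =
        if k = m then coeff k G else 0 := fun k hk => by
    rw [coeff_C_mul, coeff_pow_mul_derivative_mul_pow h h₀ (Finset.mem_range_succ_iff.1 hk),
      mul_ite, mul_one, mul_zero]
  rw [hsum, map_add, map_sum, Finset.sum_congr rfl hcoeff, coeff_X_pow_mul',
    if_neg (by omega : ¬ m + 1 ≤ m)]
  simp

end LagrangeInversion

section TorsionSeries

open PowerSeries

theorem pow_dvd_pow_succ_sub_sum_choose {R : Type*} [CommRing R] {t w : R⟦X⟧} (hw : HasSubst w)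
    (ht : t * (1 - w) = 1) (m N : ℕ) :
    w ^ N ∣ t ^ (m + 1) - ∑ l ∈ Finset.range N, ((m + l).choose l : R⟦X⟧) * w ^ l := by
  have hgeom : (mk 1 : R⟦X⟧).subst w * (1 - w) = 1 := by
    simpa [← coe_substAlgHom hw, substAlgHom_X hw] using
      congrArg (substAlgHom (R := R) hw) (mk_one_mul_one_sub_eq_one R)
  have hsubst : t = (mk 1 : R⟦X⟧).subst w := by
    linear_combination (mk 1 : R⟦X⟧).subst w * ht - t * hgeom
  have hcoeff (l : ℕ) : coeff l ((mk 1 : R⟦X⟧) ^ (m + 1)) = ((m + l).choose l : R) := by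
    rw [mk_one_pow_eq_mk_choose_add, coeff_mk, Nat.choose_symm_add]
  simpa [subst_pow hw, ← hsubst, hcoeff] using
    pow_dvd_subst_sub_sum hw ((mk 1 : R⟦X⟧) ^ (m + 1)) N

theorem coeff_X_pow_mul_mk_one_pow {R : Type*} [CommRing R] {k m : ℕ} (hkm : k ≤ m) (j : ℕ) :
    coeff m (X ^ k * (mk 1 : R⟦X⟧) ^ (j + 1)) = ((j + (m - k)).choose (m - k) : R) := by
  rw [coeff_X_pow_mul', if_pos hkm, mk_one_pow_eq_mk_choose_add, coeff_mk, Nat.choose_symm_add]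

theorem coeff_eq_torsionHalfCount {G : ℚ⟦X⟧} {m : ℕ}
    (hG : G * (1 - X) * (1 - 2 * X - X ^ 2) ^ (m + 1) = (1 - X) ^ (m + 1)) :
    coeff m G = torsionHalfCount (m + 1) := by
  set u : ℚ⟦X⟧ := mk 1
  have hu : u * (1 - X) = 1 := mk_one_mul_one_sub_eq_one ℚ
  set w : ℚ⟦X⟧ := 2 * X ^ 2 * u ^ 2 with hw
  have hfactor : (1 - 2 * X - X ^ 2 : ℚ⟦X⟧) = (1 - X) ^ 2 * (1 - w) := by
    linear_combination 2 * X ^ 2 * (u * (1 - X) + 1) * hu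
  obtain ⟨t, ht⟩ : ∃ t : ℚ⟦X⟧, t * (1 - w) = 1 :=
    ⟨(1 - w)⁻¹, PowerSeries.inv_mul_cancel _ (by simp [hw])⟩
  have hGt : G = u ^ (m + 2) * t ^ (m + 1) := by
    calc G = G * (u * (1 - X)) ^ (2 * m + 3) * (t * (1 - w)) ^ (m + 1) := by simp [hu, ht]
      _ = G * (1 - X) * ((1 - X) ^ 2 * (1 - w)) ^ (m + 1) * (u ^ (2 * m + 3) * t ^ (m + 1)) := by
        generalize (1 - X : ℚ⟦X⟧) = q, 1 - w = r
        ring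
      _ = (1 - X) ^ (m + 1) * (u ^ (2 * m + 3) * t ^ (m + 1)) := by rw [← hfactor, hG]
      _ = (u * (1 - X)) ^ (m + 1) * (u ^ (m + 2) * t ^ (m + 1)) := by rw [mul_pow]; ring
      _ = u ^ (m + 2) * t ^ (m + 1) := by rw [hu, one_pow, one_mul]
  set N := m / 2 + 1
  obtain ⟨H, hH⟩ := pow_dvd_pow_succ_sub_sum_choose
    (HasSubst.of_constantCoeff_zero' (by simp [hw] : constantCoeff w = 0)) ht m N
  have hexpand : G = ∑ l ∈ Finset.range N,
      ((2 ^ l * (m + l).choose l : ℕ) : ℚ) • (X ^ (2 * l) * u ^ (m + 2 * l + 1 + 1)) +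
        X ^ (2 * N) * (u ^ (m + 2) * 2 ^ N * u ^ (2 * N) * H) := by
    rw [hGt, eq_add_of_sub_eq' hH, mul_add, Finset.mul_sum]
    congr 1
    · refine Finset.sum_congr rfl fun l _ => ?_
      rw [hw, Nat.cast_smul_eq_nsmul, nsmul_eq_mul]
      push_cast
      ring
    · rw [hw]; ring
  rw [hexpand, map_add, map_sum, coeff_X_pow_mul', if_neg (by omega), add_zero, torsionHalfCount,
    Nat.add_sub_cancel, Nat.cast_sum]
  refine Finset.sum_congr rfl fun l hl => ?_
  have hlm : 2 * l ≤ m := by grind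
  rw [map_smul, coeff_X_pow_mul_mk_one_pow hlm, show m + 2 * l + 1 + (m - 2 * l) = 2 * (m + 1) - 1
    by omega, smul_eq_mul, ← Nat.cast_mul]

theorem coeff_derivative_mul_eq_torsionHalfCount {P D : ℚ⟦X⟧} (hP₀ : constantCoeff P = 0)
    (hD : D * (1 - P) = 1) (hP : P * (1 - 2 * P - P ^ 2) = X * (1 - P)) (m : ℕ) :
    coeff m (d⁄dX ℚ P * D) = torsionHalfCount (m + 1) := by
  obtain ⟨G, hG⟩ : ∃ G : ℚ⟦X⟧, G * ((1 - X) * (1 - 2 * X - X ^ 2) ^ (m + 1)) =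
      (1 - X) ^ (m + 1) :=
    ⟨(1 - X) ^ (m + 1) * ((1 - X) * (1 - 2 * X - X ^ 2) ^ (m + 1))⁻¹, by
      rw [mul_assoc, PowerSeries.inv_mul_cancel _ (by simp), mul_one]⟩
  have hs := HasSubst.of_constantCoeff_zero' hP₀
  have hGP : G.subst P * ((1 - P) * (1 - 2 * P - P ^ 2) ^ (m + 1)) = (1 - P) ^ (m + 1) := by
    simpa [← coe_substAlgHom hs, substAlgHom_X hs, map_ofNat (substAlgHom (R := ℚ) hs) 2] using
      congrArg (substAlgHom (R := ℚ) hs) hG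
  have hPφ : P * ((1 - 2 * P - P ^ 2) * D) = X := by linear_combination D * hP + X * hD
  rw [← coeff_eq_torsionHalfCount ((mul_assoc _ _ _).trans hG),
    ← coeff_subst_mul_derivative_mul_pow hPφ hP₀ G m]
  congr 1
  symm
  calc G.subst P * d⁄dX ℚ P * ((1 - 2 * P - P ^ 2) * D) ^ (m + 1)
      = G.subst P * d⁄dX ℚ P * ((1 - 2 * P - P ^ 2) * D) ^ (m + 1) * (D * (1 - P)) := by
        rw [hD, mul_one]
    _ = G.subst P * ((1 - P) * (1 - 2 * P - P ^ 2) ^ (m + 1)) * (d⁄dX ℚ P * D ^ (m + 2)) := by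
        rw [mul_pow]; ring
    _ = (1 - P) ^ (m + 1) * (d⁄dX ℚ P * D ^ (m + 2)) := by rw [hGP]
    _ = (D * (1 - P)) ^ (m + 1) * (d⁄dX ℚ P * D) := by rw [mul_pow]; ring
    _ = d⁄dX ℚ P * D := by rw [hD, one_pow, one_mul]

end TorsionSeries

section Intervals

/-- The Ptolemy condition for collections that also contain edges `(x, x + 1)`, so that all four
sides of a crossing quadrilateral are required. -/
def PtolemyClosed (R : Set (ℤ × ℤ)) : Prop :=
  ∀ ⦃i j r s : ℤ⦄, (i, j) ∈ R → (r, s) ∈ R → i < r → r < j → j < s →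
    (i, r) ∈ R ∧ (i, s) ∈ R ∧ (r, j) ∈ R ∧ (j, s) ∈ R

/-- Ptolemy diagrams of the polygon with vertices `a, a + 1, …, b`, the edges `(x, x + 1)` being
members of every diagram. The side `(a, b)` is a member or not. -/
structure IsDiagram (a b : ℤ) (R : Set (ℤ × ℤ)) : Prop where
  bounds : ∀ ⦃x y : ℤ⦄, (x, y) ∈ R → a ≤ x ∧ x < y ∧ y ≤ b
  edge : ∀ ⦃x : ℤ⦄, a ≤ x → x < b → (x, x + 1) ∈ R
  ptolemy : PtolemyClosed R

/-- The set of diagrams on `[a, b]`. -/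
def diagrams (a b : ℤ) : Set (Set (ℤ × ℤ)) := {R | IsDiagram a b R}

/-- The set of diagrams on `[a, b]` that contain the base `(a, b)`. -/
def basedDiagrams (a b : ℤ) : Set (Set (ℤ × ℤ)) := {R ∈ diagrams a b | (a, b) ∈ R}

/-- The third vertices of the triangles of `R` on the base `(a, b)`. -/
def apexes (a b : ℤ) (R : Set (ℤ × ℤ)) : Set ℤ := {x | (a, x) ∈ R ∧ (x, b) ∈ R}

/-- The set of based diagrams with a triangle on the base. -/
def triangleDiagrams (a b : ℤ) : Set (Set (ℤ × ℤ)) :=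
  {R ∈ basedDiagrams a b | (apexes a b R).Nonempty}

/-- The set of based diagrams with at least two triangles on the base. By the Ptolemy condition
the base is then a side of a clique with at least four vertices. -/
def cliqueDiagrams (a b : ℤ) : Set (Set (ℤ × ℤ)) :=
  {R ∈ basedDiagrams a b | (apexes a b R).Nontrivial}

/-- The arcs to `b` from `a` and from the apexes of `A` on `(a, v)`: if `A` and `(v, b)` are parts
of a clique on the base `(a, b)`, these are the arcs over `v` it forces. -/
def fan (a v b : ℤ) (A : Set (ℤ × ℤ)) : Set (ℤ × ℤ) :=
  {p | (p.1 = a ∨ p.1 ∈ apexes a v A) ∧ p.2 = b}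

/-- The part of `R` on the interval `[a, b]`. -/
def arcsWithin (a b : ℤ) (R : Set (ℤ × ℤ)) : Set (ℤ × ℤ) := {p ∈ R | a ≤ p.1 ∧ p.2 ≤ b}

/-- The part of `R` that passes over the vertex `v`. -/
def arcsOver (v : ℤ) (R : Set (ℤ × ℤ)) : Set (ℤ × ℤ) := {p ∈ R | p.1 < v ∧ v < p.2}

variable {a b v : ℤ} {R A B : Set (ℤ × ℤ)}

theorem finite_diagrams (a b : ℤ) : (diagrams a b).Finite := by
  refine (Set.finite_Icc (a, a) (b, b)).finite_subsets.subset ?_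
  rintro R hR ⟨x, y⟩ hxy
  have := hR.bounds hxy
  simp only [Set.mem_Icc, Prod.mk_le_mk]
  omega

theorem isDiagram_arcsWithin (hlt : ∀ ⦃x y : ℤ⦄, (x, y) ∈ R → x < y)
    (hedge : ∀ ⦃x : ℤ⦄, a ≤ x → x < b → (x, x + 1) ∈ R) (hR : PtolemyClosed R) :
    IsDiagram a b (arcsWithin a b R) where
  bounds x y h := ⟨h.2.1, hlt h.1, h.2.2⟩
  edge x hax hxb := ⟨hedge hax hxb, hax, Int.add_one_le_iff.2 hxb⟩
  ptolemy i j r s hij hrs hir hrj hjs := by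
    obtain ⟨hij, hai, hjb⟩ := hij
    obtain ⟨hrs, har, hsb⟩ := hrs
    obtain ⟨h₁, h₂, h₃, h₄⟩ := hR hij hrs hir hrj hjs
    exact ⟨⟨h₁, hai, hrj.le.trans hjb⟩, ⟨h₂, hai, hsb⟩, ⟨h₃, har, hjb⟩,
      ⟨h₄, har.trans hrj.le, hsb⟩⟩

theorem IsDiagram.arcsWithin (hR : IsDiagram a b R) {c d : ℤ} (hac : a ≤ c) (hdb : d ≤ b) :
    IsDiagram c d (arcsWithin c d R) :=
  isDiagram_arcsWithin (fun _ _ h => (hR.bounds h).2.1)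
    (fun _ hcx hxd => hR.edge (hac.trans hcx) (hxd.trans_le hdb)) hR.ptolemy

theorem IsDiagram.union (hA : IsDiagram a v A) (hB : IsDiagram v b B) (hav : a ≤ v)
    (hvb : v ≤ b) : IsDiagram a b (A ∪ B) where
  bounds x y h := by
    rcases h with h | h
    · grind [hA.bounds h]
    · grind [hB.bounds h]
  edge x hax hxb := by
    rcases lt_or_ge x v with hxv | hvx
    · exact .inl (hA.edge hax hxv)
    · exact .inr (hB.edge hvx hxb)
  ptolemy i j r s hij hrs hir hrj hjs := by
    rcases hij with hij | hij <;> rcases hrs with hrs | hrs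
    · exact (hA.ptolemy hij hrs hir hrj hjs).imp .inl (.imp .inl (.imp .inl .inl))
    · grind [hA.bounds hij, hB.bounds hrs]
    · grind [hB.bounds hij, hA.bounds hrs]
    · exact (hB.ptolemy hij hrs hir hrj hjs).imp .inr (.imp .inr (.imp .inr .inr))

theorem IsDiagram.insert_base (hR : IsDiagram a b R) (hab : a < b) :
    IsDiagram a b (insert (a, b) R) where
  bounds x y h := by
    rcases h with h | h
    · grind
    · exact hR.bounds h
  edge x hax hxb := .inr (hR.edge hax hxb)
  ptolemy i j r s hij hrs hir hrj hjs := by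
    rcases hij with hij | hij <;> rcases hrs with hrs | hrs
    · grind
    · grind [hR.bounds hrs]
    · grind [hR.bounds hij]
    · exact (hR.ptolemy hij hrs hir hrj hjs).imp .inr (.imp .inr (.imp .inr .inr))

theorem IsDiagram.eq_arcsWithin_union (hR : IsDiagram a b R) (v : ℤ) :
    R = _root_.arcsWithin a v R ∪ _root_.arcsWithin v b R ∪ arcsOver v R := by
  ext ⟨x, y⟩
  simp only [_root_.arcsWithin, arcsOver, Set.mem_union, Set.mem_ofPred_eq]
  grind [→ IsDiagram.bounds]

theorem arcsWithin_left_union {O : Set (ℤ × ℤ)} (hA : IsDiagram a v A) (hB : IsDiagram v b B)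
    (hO : ∀ p ∈ O, p.1 < v ∧ v < p.2) : arcsWithin a v (A ∪ B ∪ O) = A := by
  ext ⟨x, y⟩
  simp only [arcsWithin, Set.mem_union, Set.mem_ofPred_eq]
  grind [→ IsDiagram.bounds]

theorem arcsWithin_right_union {O : Set (ℤ × ℤ)} (hA : IsDiagram a v A) (hB : IsDiagram v b B)
    (hO : ∀ p ∈ O, p.1 < v ∧ v < p.2) : arcsWithin v b (A ∪ B ∪ O) = B := by
  ext ⟨x, y⟩
  simp only [arcsWithin, Set.mem_union, Set.mem_ofPred_eq]
  grind [→ IsDiagram.bounds]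

/-- `c A` prescribes the arcs over `v` in terms of the part `A` to the left of `v`. -/
theorem ncard_eq_mul_of_glue {𝓗 𝓐 𝓑 : Set (Set (ℤ × ℤ))} (c : Set (ℤ × ℤ) → Set (ℤ × ℤ))
    (h𝓗 : 𝓗 ⊆ diagrams a b) (h𝓐 : 𝓐 ⊆ diagrams a v) (h𝓑 : 𝓑 ⊆ diagrams v b)
    (hc : ∀ A ∈ 𝓐, ∀ B ∈ 𝓑, ∀ p ∈ c A, p.1 < v ∧ v < p.2)
    (hsplit : ∀ R ∈ 𝓗, arcsWithin a v R ∈ 𝓐 ∧ arcsWithin v b R ∈ 𝓑 ∧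
      arcsOver v R = c (arcsWithin a v R))
    (hglue : ∀ A ∈ 𝓐, ∀ B ∈ 𝓑, A ∪ B ∪ c A ∈ 𝓗) : 𝓗.ncard = 𝓐.ncard * 𝓑.ncard := by
  rw [← Set.ncard_prod]
  refine Set.BijOn.ncard_eq (f := fun R => (arcsWithin a v R, arcsWithin v b R))
    ⟨fun R hR => ⟨(hsplit R hR).1, (hsplit R hR).2.1⟩, fun R hR R' hR' h => ?_, ?_⟩
  · obtain ⟨hleft, hright⟩ := Prod.ext_iff.1 h
    rw [(h𝓗 hR).eq_arcsWithin_union v, (h𝓗 hR').eq_arcsWithin_union v, (hsplit R hR).2.2,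
      (hsplit R' hR').2.2]
    simp_all only
  · rintro ⟨A, B⟩ ⟨hA, hB⟩
    exact ⟨A ∪ B ∪ c A, hglue A hA B hB,
      Prod.ext (arcsWithin_left_union (h𝓐 hA) (h𝓑 hB) (hc A hA B hB))
        (arcsWithin_right_union (h𝓐 hA) (h𝓑 hB) (hc A hA B hB))⟩

theorem ncard_isGreatest_arc (hvb : v ≤ b) :
    {R ∈ diagrams a b | IsGreatest {y | (a, y) ∈ R} v}.ncard =
      (basedDiagrams a v).ncard * (diagrams v b).ncard := by
  refine ncard_eq_mul_of_glue (fun _ => ∅) (fun R hR => hR.1) (fun A hA => hA.1) subset_rfl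
    (fun _ _ _ _ _ hp => hp.elim) ?_ ?_
  · rintro R ⟨hR, hav : (a, v) ∈ R, hmax⟩
    refine ⟨⟨hR.arcsWithin le_rfl hvb, hav, le_rfl, le_rfl⟩,
      hR.arcsWithin (hR.bounds hav).2.1.le le_rfl, Set.eq_empty_of_forall_notMem ?_⟩
    rintro ⟨x, y⟩ ⟨hxy, hxv : x < v, hvy : v < y⟩
    have hay : (a, y) ∈ R := by
      rcases (hR.bounds hxy).1.eq_or_lt with rfl | hax
      · exact hxy
      · exact (hR.ptolemy hav hxy hax hxv hvy).2.1
    exact (hmax hay).not_gt hvy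
  · rintro A ⟨hA, hav⟩ B hB
    have hav' := (hA.bounds hav).2.1
    rw [Set.union_empty]
    refine ⟨hA.union hB hav'.le hvb, .inl hav, ?_⟩
    rintro y (hy | hy)
    · exact (hA.bounds hy).2.2
    · exact absurd (hB.bounds hy).1 hav'.not_ge

theorem IsDiagram.left_mem_apexes (hR : IsDiagram a b R) (hv : v ∈ apexes a b R) {x y : ℤ}
    (hxy : (x, y) ∈ R) (hxv : x < v) (hvy : v < y) (hax : a < x) : x ∈ apexes a b R := by
  obtain ⟨hav, hvb⟩ := hv
  have hxb : (x, b) ∈ R := by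
    rcases (hR.bounds hxy).2.2.eq_or_lt with rfl | hyb
    · exact hxy
    · exact (hR.ptolemy hxy hvb hxv hvy hyb).2.1
  exact ⟨(hR.ptolemy hav hxb hax hxv (hR.bounds hvb).2.1).1, hxb⟩

theorem IsDiagram.right_mem_apexes (hR : IsDiagram a b R) (hv : v ∈ apexes a b R) {x y : ℤ}
    (hxy : (x, y) ∈ R) (hxv : x < v) (hvy : v < y) (hyb : y < b) : y ∈ apexes a b R := by
  obtain ⟨hav, hvb⟩ := hv
  have hay : (a, y) ∈ R := by
    rcases (hR.bounds hxy).1.eq_or_lt with rfl | hax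
    · exact hxy
    · exact (hR.ptolemy hav hxy hax hxv hvy).2.1
  exact ⟨hay, (hR.ptolemy hay hvb (hR.bounds hav).2.1 hvy hyb).2.2.2⟩

theorem ncard_apexes_eq_singleton (a v b : ℤ) :
    {R ∈ basedDiagrams a b | apexes a b R = {v}}.ncard =
      (basedDiagrams a v).ncard * (basedDiagrams v b).ncard := by
  refine ncard_eq_mul_of_glue (fun _ => {(a, b)}) (fun R hR => hR.1.1) (fun A hA => hA.1)
    (fun B hB => hB.1) ?_ ?_ ?_
  · rintro A ⟨hA, hav⟩ B ⟨hB, hvb⟩ _ rfl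
    exact ⟨(hA.bounds hav).2.1, (hB.bounds hvb).2.1⟩
  · rintro R ⟨⟨hR, hab⟩, hapex⟩
    have hv : v ∈ apexes a b R := hapex.ge rfl
    have hav := hv.1
    have hvb := hv.2
    have hav' := (hR.bounds hav).2.1
    have hvb' := (hR.bounds hvb).2.1
    refine ⟨⟨hR.arcsWithin le_rfl hvb'.le, hav, le_rfl, le_rfl⟩,
      ⟨hR.arcsWithin hav'.le le_rfl, hvb, le_rfl, le_rfl⟩, Set.Subset.antisymm ?_ ?_⟩
    · rintro ⟨x, y⟩ ⟨hxy, hxv : x < v, hvy : v < y⟩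
      have hx := (hR.bounds hxy).1.eq_or_lt.resolve_right fun hax =>
        hxv.ne (hapex.le (hR.left_mem_apexes hv hxy hxv hvy hax))
      have hy := (hR.bounds hxy).2.2.eq_or_lt.resolve_right fun hyb =>
        hvy.ne' (hapex.le (hR.right_mem_apexes hv hxy hxv hvy hyb))
      rw [hx, hy, Set.mem_singleton_iff]
    · rintro _ rfl
      exact ⟨hab, hav', hvb'⟩
  · rintro A ⟨hA : IsDiagram a v A, hav⟩ B ⟨hB : IsDiagram v b B, hvb⟩
    have hav' := (hA.bounds hav).2.1
    have hvb' := (hB.bounds hvb).2.1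
    rw [Set.union_singleton]
    refine ⟨⟨(hA.union hB hav'.le hvb'.le).insert_base (hav'.trans hvb'), .inl rfl⟩, ?_⟩
    ext x
    simp only [apexes, Set.mem_insert_iff, Set.mem_union, Set.mem_ofPred_eq, Set.mem_singleton_iff]
    grind [→ IsDiagram.bounds]

theorem IsDiagram.mem_apexes_of_mem_apexes (hR : IsDiagram a b R) (hv : v ∈ apexes a b R)
    {w x : ℤ} (hw : w ∈ apexes a b R) (hwv : w < v) (hx : x ∈ apexes a v R) :
    x ∈ apexes a b R := by
  obtain ⟨hax, hxv⟩ := hx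
  have hvb := (hR.bounds hv.2).2.1
  refine ⟨hax, ?_⟩
  rcases lt_trichotomy x w with hxw | rfl | hwx
  · exact (hR.ptolemy hxv hw.2 hxw hwv hvb).2.1
  · exact hw.2
  · exact (hR.ptolemy hax hw.2 (hR.bounds hw.1).2.1 hwx ((hR.bounds hxv).2.1.trans hvb)).2.2.2

theorem IsDiagram.apexes_arcsWithin (hR : IsDiagram a b R) (c d : ℤ) :
    apexes c d (_root_.arcsWithin c d R) = apexes c d R := by
  ext x
  simp only [apexes, _root_.arcsWithin, Set.mem_ofPred_eq]
  grind [→ IsDiagram.bounds]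

theorem IsDiagram.lt_of_mem_fan (hA : IsDiagram a v A) (hav : (a, v) ∈ A) {p : ℤ × ℤ}
    (hp : p ∈ fan a v b A) : p.1 < v := by
  rcases hp.1 with hpa | hpa
  · exact hpa ▸ (hA.bounds hav).2.1
  · exact (hA.bounds hpa.2).2.1

theorem IsDiagram.union_fan (hA : IsDiagram a v A) (hB : IsDiagram v b B) (hav : (a, v) ∈ A)
    (hvb : (v, b) ∈ B) : IsDiagram a b (A ∪ B ∪ fan a v b A) := by
  have hAB := hA.union hB (hA.bounds hav).2.1.le (hB.bounds hvb).2.1.le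
  have hbounds : ∀ ⦃x y : ℤ⦄, (x, y) ∈ A ∪ B ∪ fan a v b A → a ≤ x ∧ x < y ∧ y ≤ b := by
    rintro x y (h | h)
    · exact hAB.bounds h
    · have hxv : x < v := hA.lt_of_mem_fan hav h
      obtain ⟨rfl | hx, rfl : y = b⟩ := h
      · exact ⟨le_rfl, hxv.trans (hB.bounds hvb).2.1, le_rfl⟩
      · exact ⟨(hA.bounds hx.1).2.1.le, hxv.trans (hB.bounds hvb).2.1, le_rfl⟩
  refine ⟨hbounds, fun x hax hxb => .inl (hAB.edge hax hxb), ?_⟩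
  intro i j r s hij hrs hir hrj hjs
  replace hij : (i, j) ∈ A ∪ B := hij.resolve_right fun h =>
    hjs.not_ge ((hbounds hrs).2.2.trans_eq h.2.symm)
  rcases hrs with hrs | ⟨(rfl : r = a) | hr, rfl : s = b⟩
  · exact (hAB.ptolemy hij hrs hir hrj hjs).imp .inl (.imp .inl (.imp .inl .inl))
  · exact absurd (hAB.bounds hij).1 hir.not_ge
  have hrv : r < v := (hA.bounds hr.2).2.1
  replace hij : (i, j) ∈ A := hij.resolve_right fun h => (hir.trans hrv).not_ge (hB.bounds h).1
  have hi : i = a ∨ i ∈ apexes a v A :=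
    (hA.bounds hij).1.eq_or_lt.imp Eq.symm (hA.left_mem_apexes hr hij hir hrj)
  have hj : j = v ∨ j ∈ apexes a v A :=
    (hA.bounds hij).2.2.eq_or_lt.imp id (hA.right_mem_apexes hr hij hir hrj)
  refine ⟨.inl (.inl ?_), .inr ⟨hi, rfl⟩, .inl (.inl ?_), ?_⟩
  · rcases hi with rfl | hi
    · exact hr.1
    · exact (hA.ptolemy hr.1 hi.2 (hA.bounds hi.1).2.1 hir hrv).2.2.1
  · rcases hj with rfl | hj
    · exact hr.2
    · exact (hA.ptolemy hj.1 hr.2 (hA.bounds hr.1).2.1 hrj (hA.bounds hj.2).2.1).2.2.1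
  · rcases hj with rfl | hj
    · exact .inl (.inr hvb)
    · exact .inr ⟨.inr hj, rfl⟩

theorem ncard_isGreatest_apexes (a v b : ℤ) :
    {R ∈ cliqueDiagrams a b | IsGreatest (apexes a b R) v}.ncard =
      (triangleDiagrams a v).ncard * (basedDiagrams v b).ncard := by
  refine ncard_eq_mul_of_glue (fan a v b)
    (fun R hR => hR.1.1.1) (fun A hA => hA.1.1) (fun B hB => hB.1) ?_ ?_ ?_
  · rintro A ⟨⟨hA : IsDiagram a v A, hav⟩, -⟩ B ⟨hB : IsDiagram v b B, hvb⟩ p hp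
    exact ⟨hA.lt_of_mem_fan hav hp, hp.2 ▸ (hB.bounds hvb).2.1⟩
  · rintro R ⟨⟨⟨hR : IsDiagram a b R, hab⟩, hnontrivial⟩, hv, hmax⟩
    obtain ⟨w, hw, hwv⟩ := hnontrivial.exists_ne v
    replace hwv : w < v := (hmax hw).lt_of_ne hwv
    have hav := (hR.bounds hv.1).2.1
    have hvb := (hR.bounds hv.2).2.1
    have hwv_mem := (hR.ptolemy hv.1 hw.2 (hR.bounds hw.1).2.1 hwv hvb).2.2.1
    refine ⟨⟨⟨hR.arcsWithin le_rfl hvb.le, hv.1, le_rfl, le_rfl⟩, ?_⟩,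
      ⟨hR.arcsWithin hav.le le_rfl, hv.2, le_rfl, le_rfl⟩, ?_⟩
    · exact hR.apexes_arcsWithin a v ▸ ⟨w, hw.1, hwv_mem⟩
    · rw [fan, hR.apexes_arcsWithin]
      refine Set.Subset.antisymm ?_ ?_
      · rintro ⟨x, y⟩ ⟨hxy, hxv : x < v, hvy : v < y⟩
        obtain rfl : y = b := (hR.bounds hxy).2.2.eq_or_lt.resolve_right fun hyb =>
          hvy.not_ge (hmax (hR.right_mem_apexes hv hxy hxv hvy hyb))
        refine ⟨(hR.bounds hxy).1.eq_or_lt.imp Eq.symm fun hax => ?_, rfl⟩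
        exact (hR.ptolemy hv.1 hxy hax hxv hvy).imp id fun h => h.2.1
      · rintro ⟨x, y⟩ ⟨rfl | hx, rfl : y = b⟩
        · exact ⟨hab, hav, hvb⟩
        · exact ⟨(hR.mem_apexes_of_mem_apexes hv hw hwv hx).2, (hR.bounds hx.2).2.1, hvb⟩
  · rintro A ⟨⟨hA : IsDiagram a v A, hav⟩, x, hx⟩ B ⟨hB : IsDiagram v b B, hvb⟩
    have hav' := (hA.bounds hav).2.1
    have hv : v ∈ apexes a b (A ∪ B ∪ fan a v b A) := ⟨.inl (.inl hav), .inl (.inr hvb)⟩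
    refine ⟨⟨⟨hA.union_fan hB hav hvb, .inr ⟨.inl rfl, rfl⟩⟩, ?_⟩, hv, ?_⟩
    · exact ⟨x, ⟨.inl (.inl hx.1), .inr ⟨.inr hx, rfl⟩⟩, v, hv, (hA.bounds hx.2).2.1.ne⟩
    · rintro y ⟨(hy | hy) | hy, hyb⟩
      · exact (hA.bounds hy).2.2
      · exact absurd (hB.bounds hy).1 hav'.not_ge
      · obtain rfl : y = b := hy.2
        exact absurd ((hA.union_fan hB hav hvb).bounds hyb).2.1 (lt_irrefl _)

end Intervals

section IntervalSeries

open Pointwise PowerSeries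
open Finset.HasAntidiagonal (antidiagonal mem_antidiagonal)

theorem IsDiagram.diff_base {a b : ℤ} {R : Set (ℤ × ℤ)} (hR : IsDiagram a b R) (hab : b ≠ a + 1)
    (hapex : (apexes a b R).Subsingleton) : IsDiagram a b (R \ {(a, b)}) where
  bounds x y h := hR.bounds h.1
  edge x hax hxb := ⟨hR.edge hax hxb, by grind⟩
  ptolemy i j r s hij hrs hir hrj hjs := by
    obtain ⟨h₁, h₂, h₃, h₄⟩ := hR.ptolemy hij.1 hrs.1 hir hrj hjs
    have hij' := hR.bounds hij.1
    have hrs' := hR.bounds hrs.1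
    have his : (i, s) ≠ (a, b) := by
      rintro ⟨⟩
      exact hrj.ne (hapex ⟨h₁, hrs.1⟩ ⟨hij.1, h₄⟩)
    exact ⟨⟨h₁, by grind⟩, ⟨h₂, his⟩, ⟨h₃, by grind⟩, ⟨h₄, by grind⟩⟩

theorem IsDiagram.subsingleton_apexes_insert {a b : ℤ} {R : Set (ℤ × ℤ)} (hR : IsDiagram a b R)
    (hlt : a < b) (hab : (a, b) ∉ R) : (apexes a b (insert (a, b) R)).Subsingleton := by
  have hmem {x : ℤ} (hx : x ∈ apexes a b (insert (a, b) R)) : (a, x) ∈ R ∧ (x, b) ∈ R := by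
    simp only [apexes, Set.mem_insert_iff, Set.mem_ofPred_eq] at hx
    grind [→ IsDiagram.bounds]
  have hle {x y : ℤ} (hx : x ∈ apexes a b (insert (a, b) R))
      (hy : y ∈ apexes a b (insert (a, b) R)) : y ≤ x := not_lt.1 fun hxy =>
    hab (hR.ptolemy (hmem hy).1 (hmem hx).2 (hR.bounds (hmem hx).1).2.1 hxy
      (hR.bounds (hmem hy).2).2.1).2.1
  exact fun x hx y hy => (hle hy hx).antisymm (hle hx hy)

theorem ncard_subsingleton_apexes {a b : ℤ} (hab : a + 1 < b) :
    {R ∈ basedDiagrams a b | (apexes a b R).Subsingleton}.ncard =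
      {R ∈ diagrams a b | (a, b) ∉ R}.ncard := by
  refine Set.BijOn.ncard_eq (f := (· \ {(a, b)})) ⟨?_, ?_, ?_⟩
  · rintro R ⟨⟨hR, -⟩, hapex⟩
    exact ⟨hR.diff_base hab.ne' hapex, fun h => h.2 rfl⟩
  · rintro R ⟨⟨-, hR⟩, -⟩ R' ⟨⟨-, hR'⟩, -⟩ h
    rw [← Set.insert_sdiff_self_of_mem hR, ← Set.insert_sdiff_self_of_mem hR']
    exact congrArg (insert (a, b)) h
  · rintro R ⟨hR, hbase⟩
    exact ⟨insert (a, b) R, ⟨⟨hR.insert_base (by omega), .inl rfl⟩,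
      hR.subsingleton_apexes_insert (by omega) hbase⟩, Set.insert_sdiff_self_of_notMem hbase⟩

theorem two_mul_ncard_basedDiagrams {a b : ℤ} (hab : a + 1 < b) :
    2 * (basedDiagrams a b).ncard = (diagrams a b).ncard + (cliqueDiagrams a b).ncard := by
  have hD := Set.ncard_sdiff_add_ncard_of_subset (Set.sep_subset (diagrams a b) ((a, b) ∈ ·))
    (finite_diagrams a b)
  have hP := Set.ncard_sdiff_add_ncard_of_subset
    (Set.sep_subset (basedDiagrams a b) fun R => (apexes a b R).Nontrivial)
    ((finite_diagrams a b).subset (Set.sep_subset _ _))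
  have hD' : diagrams a b \ basedDiagrams a b = {R ∈ diagrams a b | (a, b) ∉ R} := by
    ext; simp [basedDiagrams]
  have hP' : basedDiagrams a b \ cliqueDiagrams a b =
      {R ∈ basedDiagrams a b | (apexes a b R).Subsingleton} := by
    ext; simp +contextual [cliqueDiagrams, ← Set.not_nontrivial_iff]
  change (diagrams a b \ basedDiagrams a b).ncard + (basedDiagrams a b).ncard = _ at hD
  change (basedDiagrams a b \ cliqueDiagrams a b).ncard + (cliqueDiagrams a b).ncard = _ at hP
  rw [hD', ← ncard_subsingleton_apexes hab, ← hP'] at hD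
  omega

theorem mem_vadd_iff {t x y : ℤ} {R : Set (ℤ × ℤ)} : (x, y) ∈ t +ᵥ R ↔ (x - t, y - t) ∈ R := by
  simp [Set.mem_vadd_set_iff_neg_vadd_mem, sub_eq_neg_add]

theorem PtolemyClosed.vadd {R : Set (ℤ × ℤ)} (hR : PtolemyClosed R) (t : ℤ) :
    PtolemyClosed (t +ᵥ R) := fun i j r s hij hrs hir hrj hjs => by
  simp only [mem_vadd_iff] at hij hrs ⊢
  exact hR hij hrs (by omega) (by omega) (by omega)

theorem IsDiagram.vadd {a b : ℤ} {R : Set (ℤ × ℤ)} (hR : IsDiagram a b R) (t : ℤ) :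
    IsDiagram (a + t) (b + t) (t +ᵥ R) where
  bounds x y h := by
    have := hR.bounds (mem_vadd_iff.1 h)
    omega
  edge x hax hxb := by
    rw [mem_vadd_iff, add_sub_right_comm]
    exact hR.edge (by omega) (by omega)
  ptolemy := hR.ptolemy.vadd t

/-- Invariance under translation of a family of sets of diagrams indexed by intervals. -/
def ShiftInvariant (𝓖 : ℤ → ℤ → Set (Set (ℤ × ℤ))) : Prop :=
  ∀ ⦃a b : ℤ⦄ ⦃R : Set (ℤ × ℤ)⦄ (t : ℤ), R ∈ 𝓖 a b → t +ᵥ R ∈ 𝓖 (a + t) (b + t)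

theorem shiftInvariant_diagrams : ShiftInvariant diagrams := fun _ _ _ t hR => IsDiagram.vadd hR t

theorem shiftInvariant_basedDiagrams : ShiftInvariant basedDiagrams := fun a b _ t hR =>
  ⟨shiftInvariant_diagrams t hR.1, mem_vadd_iff.2 (by simpa using hR.2)⟩

theorem ShiftInvariant.ncard_add {𝓖 : ℤ → ℤ → Set (Set (ℤ × ℤ))} (h𝓖 : ShiftInvariant 𝓖)
    (a b t : ℤ) : (𝓖 (a + t) (b + t)).ncard = (𝓖 a b).ncard := by
  refine (Set.BijOn.ncard_eq (f := (t +ᵥ ·)) ⟨fun R hR => h𝓖 t hR,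
    (AddAction.injective t).injOn, fun R hR => ⟨-t +ᵥ R, ?_, vadd_neg_vadd t R⟩⟩).symm
  simpa using h𝓖 (-t) hR

/-- The generating function of the numbers of diagrams on intervals of length `k`. -/
noncomputable def countSeries (𝓕 : ℤ → ℤ → Set (Set (ℤ × ℤ))) : ℚ⟦X⟧ :=
  mk fun k => ((𝓕 0 k).ncard : ℚ)

theorem ncard_eq_sum_ncard_of_existsUnique {α ι : Type*} {S : Set α} (hS : S.Finite)
    {s : Finset ι} {p : α → ι → Prop} (hp : ∀ x ∈ S, ∃! i, i ∈ s ∧ p x i) :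
    S.ncard = ∑ i ∈ s, {x ∈ S | p x i}.ncard := by
  classical
  lift S to Finset α using hS
  have hone : ∀ x ∈ S, (s.bipartiteAbove p x).card = 1 := fun x hx => by
    simpa [Finset.card_eq_one, Finset.singleton_iff_unique_mem, Finset.mem_bipartiteAbove]
      using hp x hx
  have hfiber : ∀ i, {x ∈ (S : Set α) | p x i}.ncard = (S.bipartiteBelow p i).card := fun i => by
    rw [Finset.bipartiteBelow, ← Set.ncard_coe_finset, Finset.coe_filter]
    rfl
  rw [Set.ncard_coe_finset, Finset.card_eq_sum_ones, ← Finset.sum_congr rfl hone,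
    Finset.sum_card_bipartiteAbove_eq_sum_card_bipartiteBelow]
  exact Finset.sum_congr rfl fun i _ => (hfiber i).symm

/-- Splitting at a vertex: if each `R ∈ S` has a distinguished vertex `v` of `[0, k]` at which it
decomposes, then `S` is counted by a convolution. -/
theorem coeff_countSeries_mul {S : Set (Set (ℤ × ℤ))} (hS : S.Finite) (k : ℕ)
    {p : Set (ℤ × ℤ) → ℤ → Prop} (hp : ∀ R ∈ S, ∃! v, p R v)
    (hbounds : ∀ R ∈ S, ∀ v, p R v → 0 ≤ v ∧ v ≤ k) {𝓕 𝓖 : ℤ → ℤ → Set (Set (ℤ × ℤ))}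
    (h𝓖 : ShiftInvariant 𝓖)
    (hcard : ∀ v ≤ (k : ℤ), {R ∈ S | p R v}.ncard = (𝓕 0 v).ncard * (𝓖 v k).ncard) :
    coeff k (countSeries 𝓕 * countSeries 𝓖) = S.ncard := by
  rw [ncard_eq_sum_ncard_of_existsUnique hS (s := antidiagonal k)
    (p := fun R ij => p R (ij.1 : ℤ)), coeff_mul, Nat.cast_sum]
  · refine Finset.sum_congr rfl fun ij hij => ?_
    have hk : ((ij.1 + ij.2 : ℕ) : ℤ) = k := by rw [mem_antidiagonal.1 hij]
    rw [hcard _ (by omega), countSeries, countSeries, coeff_mk, coeff_mk,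
      ← h𝓖.ncard_add 0 ij.2 ij.1, zero_add, ← Nat.cast_add, add_comm ij.2, hk, Nat.cast_mul]
  · intro R hR
    obtain ⟨v, hv, huniq⟩ := hp R hR
    obtain ⟨hv₀, hvk⟩ := hbounds R hR v hv
    lift v to ℕ using hv₀
    refine ⟨(v, k - v), ⟨mem_antidiagonal.2 (by omega), hv⟩, ?_⟩
    rintro ⟨i, j⟩ ⟨hij, hi⟩
    have hiv := huniq i hi
    rw [mem_antidiagonal] at hij
    rw [Prod.mk_inj]
    omega

theorem diagrams_self (a : ℤ) : diagrams a a = {∅} := by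
  ext R
  refine ⟨fun hR => Set.eq_empty_of_forall_notMem fun ⟨x, y⟩ hxy => ?_, ?_⟩
  · have := IsDiagram.bounds hR hxy
    omega
  · rintro rfl
    exact ⟨fun x y h => h.elim, fun x hax hxa => by omega, fun i j r s hij => hij.elim⟩

theorem diagrams_succ (a : ℤ) : diagrams a (a + 1) = {{(a, a + 1)}} := by
  ext R
  refine ⟨fun hR => Set.Subset.antisymm (fun ⟨x, y⟩ hxy => ?_) ?_, ?_⟩
  · have := IsDiagram.bounds hR hxy
    rw [Set.mem_singleton_iff, Prod.mk_inj]
    omega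
  · rintro _ rfl
    exact IsDiagram.edge hR le_rfl (lt_add_one a)
  · rintro rfl
    refine ⟨fun x y h => ?_, fun x hax hxa => ?_, fun i j r s _ _ _ => ?_⟩ <;> grind

theorem basedDiagrams_self (a : ℤ) : basedDiagrams a a = ∅ :=
  Set.eq_empty_of_forall_notMem fun _ hR => (IsDiagram.bounds hR.1 hR.2).2.1.false

theorem basedDiagrams_succ (a : ℤ) : basedDiagrams a (a + 1) = diagrams a (a + 1) :=
  Set.Subset.antisymm (Set.sep_subset _ _) fun _ hR => ⟨hR, IsDiagram.edge hR le_rfl (lt_add_one a)⟩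

theorem IsDiagram.mem_Ioo_of_mem_apexes {a b : ℤ} {R : Set (ℤ × ℤ)} (hR : IsDiagram a b R) {v : ℤ}
    (hv : v ∈ apexes a b R) : v ∈ Set.Ioo a b :=
  ⟨(hR.bounds hv.1).2.1, (hR.bounds hv.2).2.1⟩

theorem cliqueDiagrams_eq_empty {a b : ℤ} (hab : b ≤ a + 1) : cliqueDiagrams a b = ∅ :=
  Set.eq_empty_of_forall_notMem fun R ⟨⟨hR, _⟩, hapex⟩ => by
    obtain ⟨v, hv⟩ := hapex.nonempty
    have := IsDiagram.mem_Ioo_of_mem_apexes hR hv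
    grind

theorem existsUnique_isGreatest {s : Set ℤ} (hs : s.Nonempty) (hbdd : BddAbove s) :
    ∃! v, IsGreatest s v :=
  have ⟨v, hv⟩ := hbdd.exists_isGreatest_of_nonempty hs
  ⟨v, hv, fun _ hw => hw.unique hv⟩

theorem countSeries_diagrams_eq :
    countSeries diagrams = 1 + countSeries basedDiagrams * countSeries diagrams := by
  ext k
  rw [map_add]
  rcases k.eq_zero_or_pos with rfl | hk
  · simp [countSeries, basedDiagrams_self, diagrams_self]
  rw [coeff_countSeries_mul (finite_diagrams 0 k) k
    (p := fun R v => IsGreatest {y | (0, y) ∈ R} v) ?_ ?_ shiftInvariant_diagrams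
    fun v hv => ncard_isGreatest_arc hv]
  · simp [countSeries, coeff_one, hk.ne']
  · exact fun R hR => existsUnique_isGreatest ⟨_, IsDiagram.edge hR le_rfl (by omega)⟩
      ⟨k, fun y hy => (IsDiagram.bounds hR hy).2.2⟩
  · intro R hR v hv
    have := IsDiagram.bounds hR hv.1
    omega

theorem countSeries_cliqueDiagrams_eq :
    countSeries cliqueDiagrams = countSeries triangleDiagrams * countSeries basedDiagrams := by
  ext k
  rw [coeff_countSeries_mul (S := cliqueDiagrams 0 k)
    ((finite_diagrams 0 k).subset fun R hR => hR.1.1) k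
    (p := fun R v => IsGreatest (apexes 0 k R) v) ?_ ?_ shiftInvariant_basedDiagrams
    fun v _ => ncard_isGreatest_apexes 0 v k, countSeries, coeff_mk]
  · exact fun R hR => existsUnique_isGreatest hR.2.nonempty
      ⟨k, fun v hv => (IsDiagram.mem_Ioo_of_mem_apexes hR.1.1 hv).2.le⟩
  · exact fun R hR v hv => (IsDiagram.mem_Ioo_of_mem_apexes hR.1.1 hv.1).imp LT.lt.le LT.lt.le

theorem countSeries_triangleDiagrams_eq :
    countSeries triangleDiagrams = countSeries cliqueDiagrams + countSeries basedDiagrams ^ 2 := by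
  ext k
  let S : Set (Set (ℤ × ℤ)) := {R ∈ basedDiagrams 0 k | ∃ v, apexes 0 k R = {v}}
  have hS : S.Finite := (finite_diagrams 0 k).subset fun R hR => hR.1.1
  have hsplit : triangleDiagrams 0 k = cliqueDiagrams 0 k ∪ S := by
    ext R
    simp only [triangleDiagrams, cliqueDiagrams, S,
      Set.exists_eq_singleton_iff_nonempty_subsingleton, ← Set.not_nontrivial_iff, Set.mem_union,
      Set.mem_ofPred_eq]
    grind [Set.Nontrivial.nonempty]
  have hdisj : Disjoint (cliqueDiagrams 0 k) S := Set.disjoint_left.2 fun R hR ⟨_, v, hv⟩ =>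
    Set.not_nontrivial_singleton (hv ▸ hR.2)
  have hcard (v : ℤ) : {R ∈ S | apexes 0 k R = {v}}.ncard =
      (basedDiagrams 0 v).ncard * (basedDiagrams v k).ncard := by
    rw [← ncard_apexes_eq_singleton]
    congr 1
    ext R
    exact ⟨fun h => ⟨h.1.1, h.2⟩, fun h => ⟨⟨h.1, v, h.2⟩, h.2⟩⟩
  rw [map_add, sq, coeff_countSeries_mul hS k ?_ ?_ shiftInvariant_basedDiagrams fun v _ => hcard v,
    countSeries, countSeries, coeff_mk, coeff_mk, hsplit,
    Set.ncard_union_eq hdisj ((finite_diagrams 0 k).subset fun R hR => hR.1.1) hS, Nat.cast_add]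
  · rintro R ⟨-, v, hv⟩
    exact ⟨v, hv, fun w hw => Set.singleton_injective (hw.symm.trans hv)⟩
  · exact fun R hR v hv =>
      (IsDiagram.mem_Ioo_of_mem_apexes hR.1.1 (hv.ge rfl)).imp LT.lt.le LT.lt.le

theorem two_mul_countSeries_basedDiagrams_add_one :
    2 * countSeries basedDiagrams + 1 = X + countSeries diagrams + countSeries cliqueDiagrams := by
  ext k
  simp only [two_mul, map_add, countSeries, coeff_mk, coeff_one, coeff_X]
  match k with
  | 0 => simp [basedDiagrams_self, diagrams_self, cliqueDiagrams_eq_empty]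
  | 1 =>
    have hP := basedDiagrams_succ 0
    have hD := diagrams_succ 0
    simp_all [cliqueDiagrams_eq_empty]
  | k + 2 =>
    have h := two_mul_ncard_basedDiagrams (a := 0) (b := (k + 2 : ℕ)) (by omega)
    rw [← Nat.cast_add, ← two_mul, h]
    simp

theorem countSeries_diagrams_mul_one_sub :
    countSeries diagrams * (1 - countSeries basedDiagrams) = 1 := by
  linear_combination countSeries_diagrams_eq

theorem countSeries_basedDiagrams_mul :
    countSeries basedDiagrams *
        (1 - 2 * countSeries basedDiagrams - countSeries basedDiagrams ^ 2) =
      X * (1 - countSeries basedDiagrams) := by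
  linear_combination (1 - countSeries basedDiagrams) * two_mul_countSeries_basedDiagrams_add_one +
    countSeries_diagrams_mul_one_sub + countSeries_cliqueDiagrams_eq +
    countSeries basedDiagrams * countSeries_triangleDiagrams_eq

theorem sum_mul_ncard_eq_torsionHalfCount (m : ℕ) :
    ∑ ij ∈ antidiagonal m,
        (ij.1 + 1) * ((basedDiagrams 0 (ij.1 + 1)).ncard * (diagrams 0 ij.2).ncard) =
      torsionHalfCount (m + 1) := by
  have hP₀ : constantCoeff (countSeries basedDiagrams) = 0 := by
    simp [← coeff_zero_eq_constantCoeff_apply, countSeries, basedDiagrams_self]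
  have h := coeff_derivative_mul_eq_torsionHalfCount hP₀ countSeries_diagrams_mul_one_sub
    countSeries_basedDiagrams_mul m
  rw [coeff_mul] at h
  have hterm (ij : ℕ × ℕ) : coeff ij.1 (d⁄dX ℚ (countSeries basedDiagrams)) *
      coeff ij.2 (countSeries diagrams) =
      ((ij.1 + 1) * ((basedDiagrams 0 (ij.1 + 1)).ncard * (diagrams 0 ij.2).ncard) : ℕ) := by
    simp only [coeff_derivative, countSeries, coeff_mk]
    push_cast
    ring
  simp only [hterm] at h
  exact_mod_cast h

end IntervalSeries

section PeriodicDiagrams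

/-- `X` together with all the edges `(x, x + 1)`. -/
def withEdges (X : Set (ℤ × ℤ)) : Set (ℤ × ℤ) := X ∪ {p | p.2 = p.1 + 1}

/-- Periodic Ptolemy diagrams of the ∞-gon with arcs of length at most `n`, the edges `(x, x + 1)`
being members of every diagram. -/
structure IsPeriodicDiagram (n : ℕ) (R : Set (ℤ × ℤ)) : Prop where
  bounds : ∀ ⦃x y : ℤ⦄, (x, y) ∈ R → x < y ∧ y ≤ x + n
  edge : ∀ x : ℤ, (x, x + 1) ∈ R
  ptolemy : PtolemyClosed R
  periodic : Periodic n R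

/-- The set of periodic diagrams of period `n`. -/
def periodicDiagrams (n : ℕ) : Set (Set (ℤ × ℤ)) := {R | IsPeriodicDiagram n R}

/-- `(u, v)` is a member of `R`, and every member of `R` overlapping it is contained in it. -/
def IsMaxArc (u v : ℤ) (R : Set (ℤ × ℤ)) : Prop :=
  (u, v) ∈ R ∧ ∀ ⦃x y : ℤ⦄, (x, y) ∈ R → x < v → u < y → u ≤ x ∧ y ≤ v

/-- The smallest `n`-periodic set containing `W`. -/
def periodicExtension (n : ℤ) (W : Set (ℤ × ℤ)) : Set (ℤ × ℤ) :=
  {p | ∃ r : ℤ, (p.1 + r * n, p.2 + r * n) ∈ W}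

theorem Periodic.add_mul_mem_iff {n : ℤ} {X : Set (ℤ × ℤ)} (hX : Periodic n X) {i j : ℤ} (r : ℤ) :
    (i + r * n, j + r * n) ∈ X ↔ (i, j) ∈ X :=
  ⟨fun h => by simpa using hX _ _ (-r) h, hX i j r⟩

theorem periodic_periodicExtension (n : ℤ) (W : Set (ℤ × ℤ)) :
    Periodic n (periodicExtension n W) := by
  rintro i j r ⟨t, ht⟩
  refine ⟨t - r, ?_⟩
  convert ht using 2 <;> ring

theorem subset_periodicExtension (n : ℤ) (W : Set (ℤ × ℤ)) : W ⊆ periodicExtension n W :=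
  fun p hp => ⟨0, by simpa using hp⟩

theorem Periodic.periodicExtension_eq {n u : ℤ} (hn : 0 < n) {R W : Set (ℤ × ℤ)}
    (hR : Periodic n R) (hWR : W ⊆ R) (hRW : ∀ p ∈ R, p.1 ∈ Set.Ico u (u + n) → p ∈ W) :
    periodicExtension n W = R := by
  ext ⟨x, y⟩
  refine ⟨fun ⟨r, hr⟩ => (hR.add_mul_mem_iff r).1 (hWR hr), fun hxy => ?_⟩
  obtain ⟨r, hr, -⟩ := existsUnique_add_zsmul_mem_Ico hn x u
  exact ⟨r, hRW _ (hR x y r hxy) hr⟩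

theorem mem_periodicExtension_iff {n u : ℤ} (hn : 0 < n) {W : Set (ℤ × ℤ)}
    (hW : ∀ p ∈ W, p.1 ∈ Set.Ico u (u + n)) {p : ℤ × ℤ} (hp : p.1 ∈ Set.Ico u (u + n)) :
    p ∈ periodicExtension n W ↔ p ∈ W := by
  refine ⟨fun ⟨r, hr⟩ => ?_, fun h => subset_periodicExtension n W h⟩
  obtain rfl : r = 0 :=
    (existsUnique_add_zsmul_mem_Ico hn p.1 u).unique (hW _ hr) (by simpa using hp)
  simpa using hr

theorem finite_periodic {n : ℤ} (hn : 0 < n) (L : ℤ) :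
    {X | Periodic n X ∧ ∀ p ∈ X, p.2 - p.1 ∈ Set.Icc 0 L}.Finite := by
  let window (X : Set (ℤ × ℤ)) : Set (ℤ × ℤ) := {p ∈ X | p.1 ∈ Set.Ico 0 (0 + n)}
  refine Set.Finite.of_injOn (f := window)
    (t := {W | W ⊆ Set.Icc (0, 0) (n, n + L)}) ?_ ?_ (Set.finite_Icc _ _).finite_subsets
  · rintro X ⟨-, hX⟩ ⟨x, y⟩ ⟨hxy, hx⟩
    have := hX _ hxy
    simp only [Set.mem_Icc, Set.mem_Ico, Prod.mk_le_mk] at *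
    omega
  · have hext {X : Set (ℤ × ℤ)} (hX : Periodic n X) : periodicExtension n (window X) = X :=
      hX.periodicExtension_eq hn (Set.sep_subset _ _) fun _ hp hp₀ => ⟨hp, hp₀⟩
    exact fun X hX Y hY h => by rw [← hext hX.1, ← hext hY.1, h]

theorem finite_periodicDiagrams {n : ℕ} (hn : n ≠ 0) : (periodicDiagrams n).Finite := by
  refine (finite_periodic (n := n) (by omega) n).subset fun R hR => ⟨hR.periodic, fun p hp => ?_⟩
  have := hR.bounds hp
  rw [Set.mem_Icc]
  omega

theorem ptolemyClosed_withEdges_iff {X : Set (ℤ × ℤ)} :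
    PtolemyClosed (withEdges X) ↔ IsPtolemy X := by
  have hmem {x y : ℤ} : (x, y) ∈ withEdges X ↔ (x, y) ∈ X ∨ y = x + 1 := Iff.rfl
  refine ⟨fun h i j r s hij hrs hir hrj hjs => ?_, fun h i j r s hij hrs hir hrj hjs => ?_⟩
  · obtain ⟨h₁, h₂, h₃, h₄⟩ := h (.inl hij) (.inl hrs) hir hrj hjs
    rw [hmem] at h₁ h₂ h₃ h₄
    exact ⟨fun _ => h₁.resolve_right (by omega), fun _ => h₂.resolve_right (by omega),
      fun _ => h₃.resolve_right (by omega), fun _ => h₄.resolve_right (by omega)⟩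
  · obtain ⟨h₁, h₂, h₃, h₄⟩ := h i j r s (hij.resolve_right fun (_ : j = i + 1) => by omega)
      (hrs.resolve_right fun (_ : s = r + 1) => by omega) hir hrj hjs
    simp only [hmem]
    grind

theorem sep_isArc_withEdges {X : Set (ℤ × ℤ)} (hX : ∀ a ∈ X, IsArc a) :
    {p ∈ withEdges X | IsArc p} = X := by
  ext p
  refine ⟨fun ⟨hp, harc⟩ => hp.resolve_right fun (hedge : p.2 = p.1 + 1) => ?_,
    fun hp => ⟨.inl hp, hX p hp⟩⟩
  rw [IsArc] at harc
  omega

theorem IsPeriodicDiagram.withEdges_sep_isArc {n : ℕ} {R : Set (ℤ × ℤ)}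
    (hR : IsPeriodicDiagram n R) : withEdges {p ∈ R | IsArc p} = R := by
  ext ⟨x, y⟩
  constructor
  · rintro (h | (rfl : y = x + 1))
    · exact h.1
    · exact hR.edge x
  · intro h
    have := hR.bounds h
    simp only [withEdges, IsArc, Set.mem_union, Set.mem_ofPred_eq, h, true_and]
    omega

theorem isPeriodicDiagram_withEdges {n : ℕ} (hn : n ≠ 0) {X : Set (ℤ × ℤ)}
    (hX : X ∈ goodDiagrams n) : IsPeriodicDiagram n (withEdges X) where
  bounds x y h := by
    obtain ⟨harc, -, -, hle⟩ := hX
    rcases h with h | (rfl : y = x + 1)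
    · have h₁ := harc _ h
      have h₂ := hle _ h
      rw [IsArc] at h₁
      omega
    · omega
  edge x := .inr rfl
  ptolemy := ptolemyClosed_withEdges_iff.2 hX.2.2.1
  periodic i j r h := h.imp (hX.2.1 i j r) fun (h : j = i + 1) => show _ = _ by grind

theorem bijOn_withEdges {n : ℕ} (hn : n ≠ 0) :
    Set.BijOn withEdges (goodDiagrams n) (periodicDiagrams n) := by
  refine ⟨fun X hX => isPeriodicDiagram_withEdges hn hX, fun X hX Y hY h => ?_, fun R hR => ?_⟩
  · rw [← sep_isArc_withEdges hX.1, ← sep_isArc_withEdges hY.1, h]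
  · replace hR : IsPeriodicDiagram n R := hR
    refine ⟨{p ∈ R | IsArc p}, ⟨fun p hp => hp.2, fun i j r h => ?_, ?_, fun p hp => ?_⟩,
      hR.withEdges_sep_isArc⟩
    · have harc : IsArc (i, j) := h.2
      exact ⟨hR.periodic i j r h.1, by simpa [IsArc] using harc⟩
    · rw [← ptolemyClosed_withEdges_iff, hR.withEdges_sep_isArc]
      exact hR.ptolemy
    · have := (hR.bounds hp.1).2
      omega

theorem IsPeriodicDiagram.existsUnique_isMaxArc {n : ℕ} {R : Set (ℤ × ℤ)}
    (hR : IsPeriodicDiagram n R) :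
    ∃! p : ℤ × ℤ, IsMaxArc p.1 p.2 R ∧ p.1 ≤ 0 ∧ 0 < p.2 := by
  let S : Set (ℤ × ℤ) := {p ∈ R | p.1 ≤ 0 ∧ 0 < p.2}
  have hS : S.Finite := by
    refine (Set.finite_Icc (-(n : ℤ), (0 : ℤ)) (0, (n : ℤ))).subset ?_
    rintro ⟨x, y⟩ ⟨hxy, hx, hy⟩
    have := hR.bounds hxy
    simp only [Set.mem_Icc, Prod.mk_le_mk]
    dsimp only at *
    omega
  obtain ⟨⟨u, v⟩, ⟨huv, hu : u ≤ 0, hv : 0 < v⟩, hmax⟩ :=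
    S.exists_max_image (fun p => p.2 - p.1) hS ⟨(0, 1), hR.edge 0, le_rfl, one_pos⟩
  replace hmax {x y : ℤ} (hxy : (x, y) ∈ R) (hxu : x ≤ u) (hvy : v ≤ y) : y - x ≤ v - u :=
    hmax (x, y) ⟨hxy, hxu.trans hu, hv.trans_le hvy⟩
  have huv_max : IsMaxArc u v R := by
    refine ⟨huv, fun x y hxy hxv huy => ⟨le_of_not_gt fun hxu => ?_, le_of_not_gt fun hvy => ?_⟩⟩
    · rcases lt_or_ge y v with hyv | hvy
      · have := hmax (hR.ptolemy hxy huv hxu huy hyv).2.1 hxu.le le_rfl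
        omega
      · have := hmax hxy hxu.le hvy
        omega
    · rcases lt_or_ge u x with hux | hxu
      · have := hmax (hR.ptolemy huv hxy hux hxv hvy).2.1 le_rfl hvy.le
        omega
      · have := hmax hxy hxu hvy.le
        omega
  refine ⟨(u, v), ⟨huv_max, hu, hv⟩, ?_⟩
  rintro ⟨x, y⟩ ⟨hxy, hx, hy⟩
  have h₁ := huv_max.2 hxy.1 (hx.trans_lt hv) (hu.trans_lt hy)
  have h₂ := hxy.2 huv (hu.trans_lt hy) (hx.trans_lt hv)
  exact Prod.ext (h₂.1.antisymm h₁.1) (h₁.2.antisymm h₂.2)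

theorem IsPeriodicDiagram.right_le_of_isMaxArc {n : ℕ} {R : Set (ℤ × ℤ)}
    (hR : IsPeriodicDiagram n R) {u v : ℤ} (hmax : IsMaxArc u v R) {x y : ℤ} (hxy : (x, y) ∈ R)
    (hx : x < u + n) : y ≤ u + n := by
  by_contra! hy
  have hmem : (x - n, y - n) ∈ R := by simpa [sub_eq_add_neg] using hR.periodic x y (-1) hxy
  have huv := (hR.bounds hmax.1).1
  have hu := (hmax.2 hmem (by omega) (by omega)).1
  omega

theorem IsDiagram.mem_Ico {a b : ℤ} {A : Set (ℤ × ℤ)} (hA : IsDiagram a b A) :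
    ∀ p ∈ A, p.1 ∈ Set.Ico a b := fun _ hp =>
  have ⟨hax, hxy, hyb⟩ := hA.bounds hp
  ⟨hax, hxy.trans_le hyb⟩

theorem IsDiagram.isPeriodicDiagram_periodicExtension {n : ℕ} (hn : n ≠ 0) {u : ℤ}
    {A : Set (ℤ × ℤ)} (hA : IsDiagram u (u + n) A) :
    IsPeriodicDiagram n (periodicExtension n A) where
  bounds x y := by
    rintro ⟨r, hr⟩
    have := hA.bounds hr
    omega
  edge x := by
    obtain ⟨r, hr, -⟩ := existsUnique_add_zsmul_mem_Ico (by omega : (0 : ℤ) < n) x u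
    exact ⟨r, by simpa [add_right_comm] using hA.edge hr.1 hr.2⟩
  ptolemy i j r s := by
    rintro ⟨t, hij⟩ hrs hir hrj hjs
    have hper := periodic_periodicExtension n A
    have hbounds := hA.bounds hij
    replace hrs := (mem_periodicExtension_iff (by omega) hA.mem_Ico
      ⟨by dsimp only; omega, by dsimp only; omega⟩).1 (hper r s t hrs)
    obtain ⟨h₁, h₂, h₃, h₄⟩ := hA.ptolemy hij hrs (by omega) (by omega) (by omega)
    exact ⟨⟨t, h₁⟩, ⟨t, h₂⟩, ⟨t, h₃⟩, ⟨t, h₄⟩⟩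
  periodic := periodic_periodicExtension n A

theorem IsDiagram.isMaxArc_periodicExtension {n : ℕ} {u v : ℤ} {A : Set (ℤ × ℤ)}
    (hA : IsDiagram u (u + n) A) (hv : IsGreatest {y | (u, y) ∈ A} v) :
    IsMaxArc u v (periodicExtension n A) := by
  refine ⟨subset_periodicExtension n A hv.1, ?_⟩
  rintro x y ⟨r, hr⟩ hxv huy
  have hr' := hA.bounds hr
  have hv' := hA.bounds hv.1
  obtain rfl : r = 0 := by
    have hlt : r * n < 1 * n := by omega
    have hgt : -1 * n < r * n := by omega
    have := lt_of_mul_lt_mul_right hlt (by omega)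
    have := lt_of_mul_lt_mul_right hgt (by omega)
    omega
  simp only [zero_mul, add_zero] at hr hr'
  refine ⟨hr'.1, le_of_not_gt fun hvy => hvy.not_ge (hv.2 ?_)⟩
  rcases hr'.1.eq_or_lt with rfl | hux
  · exact hr
  · exact (hA.ptolemy hv.1 hr hux hxv hvy).2.1

theorem IsDiagram.arcsWithin_periodicExtension {n : ℕ} (hn : n ≠ 0) {u : ℤ} {A : Set (ℤ × ℤ)}
    (hA : IsDiagram u (u + n) A) :
    _root_.arcsWithin u (u + n) (periodicExtension n A) = A := by
  ext ⟨x, y⟩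
  refine ⟨fun ⟨hxy, hux, hyu⟩ => ?_, fun h =>
    ⟨subset_periodicExtension n A h, (hA.bounds h).1, (hA.bounds h).2.2⟩⟩
  have := ((hA.isPeriodicDiagram_periodicExtension hn).bounds hxy).1
  exact (mem_periodicExtension_iff (by omega) hA.mem_Ico ⟨hux, this.trans_le hyu⟩).1 hxy

theorem IsPeriodicDiagram.periodicExtension_arcsWithin {n : ℕ} (hn : n ≠ 0) {R : Set (ℤ × ℤ)}
    (hR : IsPeriodicDiagram n R) {u v : ℤ} (hmax : IsMaxArc u v R) :
    periodicExtension n (arcsWithin u (u + n) R) = R :=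
  hR.periodic.periodicExtension_eq (by omega) (Set.sep_subset _ _) fun _ hp hpu =>
    ⟨hp, hpu.1, hR.right_le_of_isMaxArc hmax hp hpu.2⟩

theorem ncard_isMaxArc {n : ℕ} (hn : n ≠ 0) {u v : ℤ} (hv : v ≤ u + n) :
    {R ∈ periodicDiagrams n | IsMaxArc u v R}.ncard =
      (basedDiagrams u v).ncard * (diagrams v (u + n)).ncard := by
  rw [← ncard_isGreatest_arc hv]
  refine Set.BijOn.ncard_eq (f := arcsWithin u (u + n)) ⟨?_, ?_, ?_⟩
  · rintro R ⟨hR : IsPeriodicDiagram n R, huv, hmax⟩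
    have hlt := (hR.bounds huv).1
    refine ⟨isDiagram_arcsWithin (fun x y h => (hR.bounds h).1) (fun x _ _ => hR.edge x) hR.ptolemy,
      ⟨huv, le_rfl, hv⟩, fun y hy => (hmax hy.1 hlt (hR.bounds hy.1).1).2⟩
  · rintro R ⟨hR : IsPeriodicDiagram n R, hmax⟩ R' ⟨hR' : IsPeriodicDiagram n R', hmax'⟩ h
    rw [← hR.periodicExtension_arcsWithin hn hmax, ← hR'.periodicExtension_arcsWithin hn hmax', h]
  · rintro A ⟨hA : IsDiagram u (u + n) A, hA'⟩
    exact ⟨periodicExtension n A, ⟨hA.isPeriodicDiagram_periodicExtension hn,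
      hA.isMaxArc_periodicExtension hA'⟩, hA.arcsWithin_periodicExtension hn⟩

theorem ncard_periodicDiagrams (m : ℕ) :
    (periodicDiagrams (m + 1)).ncard = torsionHalfCount (m + 1) := by
  rw [← sum_mul_ncard_eq_torsionHalfCount, ncard_eq_sum_ncard_of_existsUnique
    (finite_periodicDiagrams m.succ_ne_zero)
    (s := (Finset.HasAntidiagonal.antidiagonal m).sigma fun ij => Finset.range (ij.1 + 1))
    (p := fun R q => IsMaxArc (-q.2) (q.1.1 + 1 - q.2) R), Finset.sum_sigma]
  · refine Finset.sum_congr rfl fun ij hij => ?_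
    rw [Finset.HasAntidiagonal.mem_antidiagonal] at hij
    have hcard (t : ℕ) : {R ∈ periodicDiagrams (m + 1) | IsMaxArc (-t) (ij.1 + 1 - t) R}.ncard =
        (basedDiagrams 0 (ij.1 + 1)).ncard * (diagrams 0 ij.2).ncard := by
      rw [ncard_isMaxArc m.succ_ne_zero (by omega),
        ← shiftInvariant_basedDiagrams.ncard_add 0 (ij.1 + 1) (-t),
        ← shiftInvariant_diagrams.ncard_add 0 ij.2 (ij.1 + 1 - t)]
      congr 3 <;> omega
    simp only [hcard, Finset.sum_const, Finset.card_range, smul_eq_mul]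
  · intro R hR
    obtain ⟨⟨u, v⟩, ⟨hmax, hu, hv⟩, huniq⟩ := IsPeriodicDiagram.existsUnique_isMaxArc hR
    have hlt := hR.bounds hmax.1
    dsimp only at *
    refine ⟨⟨((v - u - 1).toNat, (m + 1 + u - v).toNat), (-u).toNat⟩, ⟨?_, ?_⟩, ?_⟩
    · simp only [Finset.mem_sigma, Finset.HasAntidiagonal.mem_antidiagonal, Finset.mem_range]
      omega
    · convert hmax using 1 <;> grind
    · rintro ⟨⟨i, j⟩, t⟩ ⟨hmem, hq⟩
      simp only [Finset.mem_sigma, Finset.HasAntidiagonal.mem_antidiagonal,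
        Finset.mem_range] at hmem
      have := huniq (-t, i + 1 - t) ⟨hq, by omega, by omega⟩
      grind

theorem finite_goodDiagrams {n : ℕ} (hn : n ≠ 0) : (goodDiagrams n).Finite :=
  (bijOn_withEdges hn).finite_iff_finite.2 (finite_periodicDiagrams hn)

theorem ncard_goodDiagrams {n : ℕ} (hn : n ≠ 0) : (goodDiagrams n).ncard = torsionHalfCount n := by
  obtain ⟨m, rfl⟩ := Nat.exists_eq_succ_of_ne_zero hn
  rw [(bijOn_withEdges hn).ncard_eq, ncard_periodicDiagrams]

end PeriodicDiagrams

section Burnside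

open Pointwise

theorem sum_totient_mul_div_eq_sum_gcd {n : ℕ} (hn : n ≠ 0) (T : ℕ → ℕ) :
    ∑ d ∈ n.divisors, d.totient * T (n / d) = ∑ i ∈ Finset.range n, T (n.gcd i) := by
  rw [← Nat.sum_div_divisors n fun d => d.totient * T (n / d),
    ← Finset.sum_fiberwise_of_maps_to (s := Finset.range n) fun i _ =>
      Nat.mem_divisors.2 ⟨n.gcd_dvd_left i, hn⟩]
  refine Finset.sum_congr rfl fun d hd => ?_
  have hdn := Nat.dvd_of_mem_divisors hd
  rw [Nat.div_div_self hdn hn, Nat.totient_div_of_dvd hdn, ← smul_eq_mul, ← Finset.sum_const]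
  exact Finset.sum_congr rfl fun i hi => by rw [(Finset.mem_filter.1 hi).2]

/-- The action of `ZMod n` induced by an action of `ℤ` for which `n` acts trivially. -/
noncomputable abbrev zmodAddAction {β : Type*} [AddAction ℤ β] {n : ℕ}
    (h : ∀ x : β, (n : ℤ) +ᵥ x = x) : AddAction (ZMod n) β :=
  AddAction.compHom β (ZMod.lift n ⟨AddAction.toPermHom ℤ β, Equiv.ext h⟩)

theorem zmodAddAction_intCast_vadd {β : Type*} [AddAction ℤ β] {n : ℕ}
    (h : ∀ x : β, (n : ℤ) +ᵥ x = x) (b : ℤ) (x : β) :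
    letI := zmodAddAction h
    (b : ZMod n) +ᵥ x = b +ᵥ x :=
  congrArg (fun σ : Equiv.Perm β => σ x) (ZMod.lift_coe n ⟨AddAction.toPermHom ℤ β, Equiv.ext h⟩ b)

theorem mul_card_orbits_eq_sum_card_fixedBy {β : Type*} [AddAction ℤ β] [Finite β] {n : ℕ}
    (hn : n ≠ 0) (h : ∀ x : β, (n : ℤ) +ᵥ x = x) :
    n * Nat.card (AddAction.orbitRel.Quotient ℤ β) =
      ∑ b ∈ Finset.range n, Nat.card (AddAction.fixedBy β (b : ℤ)) := by
  classical
  have : NeZero n := ⟨hn⟩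
  let := zmodAddAction h
  have hcast (b : ℤ) (x : β) : (b : ZMod n) +ᵥ x = b +ᵥ x := zmodAddAction_intCast_vadd h b x
  have hval (b : ZMod n) (x : β) : (b.val : ℤ) +ᵥ x = b +ᵥ x := by
    rw [← hcast, Int.cast_natCast, ZMod.natCast_zmod_val]
  have horbit : AddAction.orbitRel (ZMod n) β = AddAction.orbitRel ℤ β := by
    ext x y
    exact ⟨fun ⟨b, hb⟩ => ⟨b.val, (hval b y).trans hb⟩, fun ⟨b, hb⟩ => ⟨b, (hcast b y).trans hb⟩⟩
  have := Fintype.ofFinite β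
  have hburnside := AddAction.sum_card_fixedBy_eq_card_orbits_mul_card_addGroup (ZMod n) β
  simp only [← Nat.card_eq_fintype_card, Nat.card_zmod, horbit] at hburnside
  rw [mul_comm, AddAction.orbitRel.Quotient, ← hburnside]
  refine Finset.sum_nbij' ZMod.val (fun b : ℕ => (b : ZMod n))
    (fun b _ => Finset.mem_range.2 b.val_lt) (fun _ _ => Finset.mem_univ _)
    (fun b _ => b.natCast_zmod_val) (fun b hb => ZMod.val_cast_of_lt (Finset.mem_range.1 hb))
    fun b _ => ?_
  simp only [AddAction.fixedBy, hval]

theorem mul_ncard_image_orbit_eq_sum_ncard {α : Type*} [AddAction ℤ α] {S : Set α} (hS : S.Finite)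
    (hinv : ∀ (b : ℤ) ⦃x⦄, x ∈ S → b +ᵥ x ∈ S) {n : ℕ} (hn : n ≠ 0)
    (h : ∀ x ∈ S, (n : ℤ) +ᵥ x = x) :
    n * (AddAction.orbit ℤ '' S).ncard =
      ∑ b ∈ Finset.range n, {x ∈ S | (b : ℤ) +ᵥ x = x}.ncard := by
  let S' : SubAddAction ℤ α := ⟨S, fun b _ hx => hinv b hx⟩
  have : Finite S' := hS
  have hker : AddAction.orbitRel ℤ S' = Setoid.ker fun x : S' => AddAction.orbit ℤ (x : α) := by
    ext x y
    rw [SubAddAction.orbitRel_of_subAdd]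
    exact AddAction.orbit_eq_iff.symm
  have hquot : (AddAction.orbit ℤ '' S).ncard = Nat.card (AddAction.orbitRel.Quotient ℤ S') := by
    rw [Set.image_eq_range, ← Nat.card_coe_set_eq, AddAction.orbitRel.Quotient, hker]
    exact (Nat.card_congr (Setoid.quotientKerEquivRange _)).symm
  rw [hquot, mul_card_orbits_eq_sum_card_fixedBy hn fun x : S' => Subtype.ext (h x x.2)]
  refine Finset.sum_congr rfl fun b _ => ?_
  rw [Nat.card_coe_set_eq, ← Set.ncard_image_of_injective _ Subtype.val_injective]
  congr 1
  ext x
  have hmem : x ∈ S' ↔ x ∈ S := Iff.rfl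
  simp [Subtype.ext_iff, hmem, and_comm]

theorem shiftSet_eq_vadd (b : ℤ) (X : Set (ℤ × ℤ)) : shiftSet b X = b +ᵥ X := by
  ext ⟨x, y⟩
  rw [mem_vadd_iff]
  refine ⟨?_, fun h => ⟨_, h, by simp⟩⟩
  rintro ⟨p, hp, h⟩
  obtain ⟨rfl, rfl⟩ := Prod.mk.inj h
  simpa

theorem periodic_iff_mem_stabilizer {n : ℤ} {X : Set (ℤ × ℤ)} :
    Periodic n X ↔ n ∈ AddAction.stabilizer ℤ X := by
  rw [AddAction.mem_stabilizer_iff]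
  refine ⟨fun hX => ?_, fun hX i j r hij => ?_⟩
  · ext ⟨x, y⟩
    rw [mem_vadd_iff]
    simpa [sub_eq_add_neg] using hX.add_mul_mem_iff (-1)
  · have hr : r * n ∈ AddAction.stabilizer ℤ X := by
      simpa using (AddAction.stabilizer ℤ X).zsmul_mem hX r
    rw [← AddAction.mem_stabilizer_iff.1 hr, mem_vadd_iff]
    simpa

theorem vadd_mem_goodDiagrams {n : ℕ} (t : ℤ) ⦃X : Set (ℤ × ℤ)⦄ (hX : X ∈ goodDiagrams n) :
    t +ᵥ X ∈ goodDiagrams n := by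
  obtain ⟨harc, hper, hpt, hle⟩ := hX
  refine ⟨fun ⟨x, y⟩ h => ?_, ?_, fun i j r s hij hrs hir hrj hjs => ?_, fun ⟨x, y⟩ h => ?_⟩
  · simpa [IsArc] using harc _ (mem_vadd_iff.1 h)
  · rw [periodic_iff_mem_stabilizer, AddAction.mem_stabilizer_iff] at hper ⊢
    rw [vadd_comm, hper]
  · simp only [mem_vadd_iff] at *
    simpa using hpt _ _ _ _ hij hrs (by omega) (by omega) (by omega)
  · simpa using hle _ (mem_vadd_iff.1 h)

theorem Periodic.mem_add_mul_of_isPtolemy {g : ℤ} {X : Set (ℤ × ℤ)} (hper : Periodic g X)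
    (hX : IsPtolemy X) (hg : 0 < g) {i j : ℤ} (hij : (i, j) ∈ X) (hlt : g < j - i) (k : ℕ) :
    (i, j + k * g) ∈ X := by
  induction k with
  | zero => simpa using hij
  | succ k ih =>
    have hk : 0 ≤ k * g := by positivity
    have hshift := hper _ _ 1 ih
    have hlong := (hX _ _ _ _ ih hshift (by omega) (by omega) (by omega)).2.1 (by omega)
    convert hlong using 2
    push_cast
    ring

theorem Periodic.length_le_of_isPtolemy {g L : ℤ} {X : Set (ℤ × ℤ)} (hper : Periodic g X)
    (hX : IsPtolemy X) (hg : 0 < g) (hL : ∀ a ∈ X, a.2 - a.1 ≤ L) : ∀ a ∈ X, a.2 - a.1 ≤ g := by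
  rintro ⟨i, j⟩ hij
  by_contra! hlt
  have hle := hL _ (hper.mem_add_mul_of_isPtolemy hX hg hij hlt L.toNat)
  have : L.toNat ≤ L.toNat * g := le_mul_of_one_le_right (by positivity) hg
  dsimp only at *
  omega

theorem intGcd_mem_iff {H : AddSubgroup ℤ} {a b : ℤ} : (a.gcd b : ℤ) ∈ H ↔ a ∈ H ∧ b ∈ H := by
  simp only [← AddSubgroup.zmultiples_le, ← Int.zmultiples_sup, sup_le_iff]

theorem sep_vadd_eq_self_goodDiagrams {n : ℕ} (hn : n ≠ 0) (b : ℕ) :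
    {X ∈ goodDiagrams n | (b : ℤ) +ᵥ X = X} = goodDiagrams (n.gcd b) := by
  have hg : 0 < n.gcd b := Nat.gcd_pos_of_pos_left b (Nat.pos_of_ne_zero hn)
  ext X
  have hgcd : Periodic (n.gcd b) X ↔ Periodic n X ∧ (b : ℤ) +ᵥ X = X := by
    rw [periodic_iff_mem_stabilizer, periodic_iff_mem_stabilizer, ← Int.gcd_natCast_natCast,
      intGcd_mem_iff, AddAction.mem_stabilizer_iff (a := X) (g := (b : ℤ))]
  constructor
  · rintro ⟨⟨harc, hper, hpt, hle⟩, hb⟩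
    have hper' := hgcd.2 ⟨hper, hb⟩
    exact ⟨harc, hper', hpt, hper'.length_le_of_isPtolemy hpt (by omega) hle⟩
  · rintro ⟨harc, hper, hpt, hle⟩
    obtain ⟨hper', hb⟩ := hgcd.1 hper
    have := Nat.gcd_le_left b (Nat.pos_of_ne_zero hn)
    exact ⟨⟨harc, hper', hpt, fun a ha => (hle a ha).trans (by omega)⟩, hb⟩

theorem mul_ncard_image_orbit_goodDiagrams {n : ℕ} (hn : n ≠ 0) :
    n * (AddAction.orbit ℤ '' goodDiagrams n).ncard =
      ∑ b ∈ Finset.range n, (goodDiagrams (n.gcd b)).ncard := by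
  simp only [← sep_vadd_eq_self_goodDiagrams hn]
  exact mul_ncard_image_orbit_eq_sum_ncard (finite_goodDiagrams hn) vadd_mem_goodDiagrams hn
    fun X hX => periodic_iff_mem_stabilizer.1 hX.2.1

theorem setOf_shiftSet_eq_orbit (X : Set (ℤ × ℤ)) :
    {Y | ∃ b : ℤ, Y = shiftSet b X} = AddAction.orbit ℤ X := by
  ext Y
  simp only [shiftSet_eq_vadd, AddAction.mem_orbit_iff, Set.mem_ofPred_eq, eq_comm]

theorem setOf_shiftSet_orbits_eq_image_orbit (𝓢 : Set (Set (ℤ × ℤ))) :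
    {O | ∃ X ∈ 𝓢, O = {Y | ∃ b : ℤ, Y = shiftSet b X}} = AddAction.orbit ℤ '' 𝓢 := by
  ext O
  simp only [setOf_shiftSet_eq_orbit, Set.mem_image, Set.mem_ofPred_eq, eq_comm]

end Burnside

/-- `n` times the number of orbits of the shift action on `n`-periodic Ptolemy
diagrams with arcs of length at most `n` equals `∑_{d ∣ n} φ(d) · N_{n/d}`. -/
theorem count_orbits (n : ℕ) (hn : 1 ≤ n) :
    n * {O : Set (Set (ℤ × ℤ)) | ∃ X ∈ goodDiagrams n,
          O = {Y | ∃ b : ℤ, Y = shiftSet b X}}.ncard =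
    ∑ d ∈ n.divisors, Nat.totient d * torsionHalfCount (n / d) := by
  have hn' : n ≠ 0 := Nat.one_le_iff_ne_zero.1 hn
  rw [setOf_shiftSet_orbits_eq_image_orbit, mul_ncard_image_orbit_goodDiagrams hn',
    sum_totient_mul_div_eq_sum_gcd hn']
  exact Finset.sum_congr rfl fun b _ => ncard_goodDiagrams (Nat.gcd_ne_zero_left hn')
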